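/- Let p be a positive integer, and let λ ∈ X⁺ ∩ C̄_ℤ with λ = w·0 + pσ for some w ∈ W and σ ∈ X. Then for every simple root α ∈ Δ one has (w⁻¹·λ, α∨) ≤ 0 and (w⁻¹σ, α∨) ≤ 0; that is, w⁻¹·λ and w⁻¹σ are antidominant. -/

import Mathlib

/-!
Write `λ + ρ = wρ + pσ`, so that `w⁻¹(λ + ρ) = ρ + p w⁻¹σ` and `w⁻¹·λ = p w⁻¹σ`; the two claims are
therefore equivalent. For a simple root `α`, invariance of the inner product gives
`(λ + ρ, (wα)∨) = (ρ, α∨) + p n` with `n = (w⁻¹σ, α∨) = (σ, (wα)∨)` an integer. As `wα` is a root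
and `λ` lies in the closed alcove, the left side is at most `p`, whether `wα` is positive or
negative. Since `(ρ, α∨) > 0` (in fact it equals `1`), this yields `p n < p`, hence `n ≤ 0`.

Positivity of `(ρ, α∨)` is `pair_rho_pos`: the reflection in `α` permutes the positive roots other
than `α` (`reflect_pos`), so their contributions to `(2ρ, α∨)` cancel.
-/

open scoped RealInnerProductSpace

namespace PaperDNN

variable {E : Type*} [NormedAddCommGroup E] [InnerProductSpace ℝ E]

/-- The coroot pairing `⟨x, α∨⟩ = 2⟪x,α⟫/⟪α,α⟫`. -/
noncomputable def pair (x a : E) : ℝ := 2 * ⟪x, a⟫ / ⟪a, a⟫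

/-- `Φ` is a reduced irreducible root system in the Euclidean space `E`. -/
structure IsRootSystem (Φ : Finset E) : Prop where
  nonempty : Φ.Nonempty
  ne_zero : ∀ α ∈ Φ, α ≠ 0
  span_top : Submodule.span ℝ (Φ : Set E) = ⊤
  reduced : ∀ α ∈ Φ, ∀ t : ℝ, t • α ∈ Φ → t = 1 ∨ t = -1
  reflect_mem : ∀ α ∈ Φ, ∀ β ∈ Φ, β - pair β α • α ∈ Φ
  pair_int : ∀ α ∈ Φ, ∀ β ∈ Φ, ∃ n : ℤ, pair β α = (n : ℝ)
  irred : ∀ S T : Set E, S ∪ T = (Φ : Set E) → S.Nonempty → T.Nonempty →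
      (∀ a ∈ S, ∀ b ∈ T, ⟪a, b⟫ = 0) → False

/-- `Δ` is a base of simple roots for `Φ`: every root is a nonnegative or
nonpositive integral combination of the simple roots. -/
structure IsBase (Φ Δ : Finset E) : Prop where
  subset : Δ ⊆ Φ
  indep : LinearIndependent ℝ (fun a : {x // x ∈ Δ} => (a : E))
  root_decomp : ∀ β ∈ Φ, (∃ c : E → ℕ, β = ∑ α ∈ Δ, (c α : ℝ) • α) ∨
      (∃ c : E → ℕ, β = -(∑ α ∈ Δ, (c α : ℝ) • α))

open Classical in
/-- The positive roots `Φ⁺` of `Φ` with respect to the base `Δ`. -/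
noncomputable def posRoots (Φ Δ : Finset E) : Finset E :=
  Φ.filter fun β => ∃ c : E → ℕ, β = ∑ α ∈ Δ, (c α : ℝ) • α

/-- `ρ`, one-half the sum of the positive roots. -/
noncomputable def rho (Φ Δ : Finset E) : E := (2⁻¹ : ℝ) • ∑ β ∈ posRoots Φ Δ, β

/-- The Weyl group of `Φ`, the subgroup of `GL(E)` generated by the reflections
`s_α : x ↦ x − ⟨x,α∨⟩α` in the roots `α ∈ Φ`.  Applied to a subset `J` of the
simple roots it yields the parabolic subgroup `W_J`. -/
def Weyl (Φ : Finset E) : Subgroup (E ≃ₗ[ℝ] E) :=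
  Subgroup.closure { w : E ≃ₗ[ℝ] E | ∃ α ∈ Φ, ∀ x, w x = x - pair x α • α }

/-- The dot action `w·λ = w(λ+ρ) − ρ`. -/
noncomputable def dotAct (Φ Δ : Finset E) (w : E ≃ₗ[ℝ] E) (lam : E) : E :=
  w (lam + rho Φ Δ) - rho Φ Δ

/-- The weight lattice `X = {λ ∈ E : ⟨λ,α∨⟩ ∈ ℤ for all α ∈ Φ}`. -/
def weightLattice (Φ : Finset E) : Set E :=
  { lam | ∀ α ∈ Φ, ∃ n : ℤ, pair lam α = (n : ℝ) }

/-- The root lattice `ℤΦ`. -/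
def rootLattice (Φ : Finset E) : AddSubgroup E := AddSubgroup.closure (Φ : Set E)

/-- The bottom `p`-alcove `C_ℤ = {λ ∈ X : 0 < ⟨λ+ρ,β∨⟩ < p for all β ∈ Φ⁺}`. -/
def bottomAlcove (Φ Δ : Finset E) (p : ℕ) : Set E :=
  { lam ∈ weightLattice Φ | ∀ β ∈ posRoots Φ Δ,
      0 < pair (lam + rho Φ Δ) β ∧ pair (lam + rho Φ Δ) β < (p : ℝ) }

/-- The closure `C̄_ℤ = {λ ∈ X : 0 ≤ ⟨λ+ρ,β∨⟩ ≤ p for all β ∈ Φ⁺}` of the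
bottom `p`-alcove. -/
def closedAlcove (Φ Δ : Finset E) (p : ℕ) : Set E :=
  { lam ∈ weightLattice Φ | ∀ β ∈ posRoots Φ Δ,
      0 ≤ pair (lam + rho Φ Δ) β ∧ pair (lam + rho Φ Δ) β ≤ (p : ℝ) }

/-- Membership in `X⁺`, the set of dominant weights. -/
def isDominant (Φ Δ : Finset E) (lam : E) : Prop :=
  lam ∈ weightLattice Φ ∧ ∀ α ∈ Δ, 0 ≤ pair lam α

/-- `a₀` is the highest short root of `Φ`: a root of minimal length such that
every root of the same length is `≤ a₀` (their difference is a nonnegative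
integral combination of simple roots). -/
structure IsHighestShortRoot (Φ Δ : Finset E) (a₀ : E) : Prop where
  mem : a₀ ∈ Φ
  short : ∀ β ∈ Φ, ⟪a₀, a₀⟫ ≤ ⟪β, β⟫
  highest : ∀ β ∈ Φ, ⟪β, β⟫ = ⟪a₀, a₀⟫ →
      ∃ c : E → ℕ, a₀ - β = ∑ α ∈ Δ, (c α : ℝ) • α


theorem pair_add (x y a : E) : pair (x + y) a = pair x a + pair y a := by
  simp only [pair, inner_add_left]; ring

theorem pair_smul (t : ℝ) (x a : E) : pair (t • x) a = t * pair x a := by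
  simp only [pair, real_inner_smul_left]; ring

theorem pair_sub (x y a : E) : pair (x - y) a = pair x a - pair y a := by
  simp only [pair, inner_sub_left]; ring

theorem pair_neg_right (x a : E) : pair x (-a) = -pair x a := by
  simp only [pair, inner_neg_right, inner_neg_left, neg_neg]; ring

theorem pair_sum {ι : Type*} (s : Finset ι) (f : ι → E) (a : E) :
    pair (∑ i ∈ s, f i) a = ∑ i ∈ s, pair (f i) a := by
  simp only [pair, sum_inner, Finset.mul_sum, Finset.sum_div]

theorem pair_self {a : E} (ha : a ≠ 0) : pair a a = 2 := by
  have : ⟪a, a⟫ ≠ 0 := inner_self_ne_zero.mpr ha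
  simp only [pair]; field_simp

theorem pair_reflect {a : E} (ha : a ≠ 0) (x : E) : pair (x - pair x a • a) a = -pair x a := by
  rw [pair_sub, pair_smul, pair_self ha]; ring

theorem reflect_reflect {a : E} (ha : a ≠ 0) (x : E) :
    (x - pair x a • a) - pair (x - pair x a • a) a • a = x := by
  rw [pair_reflect ha]; simp

theorem inner_reflect {a : E} (ha : a ≠ 0) (x y : E) :
    ⟪x - pair x a • a, y - pair y a • a⟫ = ⟪x, y⟫ := by
  have : ⟪a, a⟫ ≠ 0 := inner_self_ne_zero.mpr ha
  simp only [inner_sub_left, inner_sub_right, real_inner_smul_left, real_inner_smul_right, pair,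
    real_inner_comm y a]
  field_simp
  ring

theorem IsRootSystem.neg_mem {Φ : Finset E} (hΦ : IsRootSystem Φ) {β : E} (hβ : β ∈ Φ) :
    -β ∈ Φ := by
  have h := hΦ.reflect_mem β hβ β hβ
  rw [pair_self (hΦ.ne_zero β hβ)] at h
  convert h using 1
  module

/-- Weyl group elements are isometries permuting the roots. -/
theorem weyl_spec {Φ : Finset E} (hΦ : IsRootSystem Φ) {w : E ≃ₗ[ℝ] E} (hw : w ∈ Weyl Φ) :
    (∀ x y, ⟪w x, w y⟫ = ⟪x, y⟫) ∧ ∀ β, w β ∈ Φ ↔ β ∈ Φ := by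
  induction hw using Subgroup.closure_induction with
  | mem w h =>
    obtain ⟨α, hα, h⟩ := h
    have h0 := hΦ.ne_zero α hα
    refine ⟨fun x y => by rw [h, h, inner_reflect h0], fun β => ⟨fun hb => ?_, fun hb => ?_⟩⟩
    · have := hΦ.reflect_mem α hα _ hb
      rwa [h, reflect_reflect h0] at this
    · rw [h]; exact hΦ.reflect_mem α hα _ hb
  | one => exact ⟨fun _ _ => rfl, fun _ => Iff.rfl⟩
  | mul u v _ _ hu hv =>
    exact ⟨fun x y => (hu.1 _ _).trans (hv.1 _ _), fun β => (hu.2 _).trans (hv.2 _)⟩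
  | inv u _ hu =>
    have key : ∀ x, u (u⁻¹ x) = x := fun x => u.apply_symm_apply x
    exact ⟨fun x y => by rw [← hu.1, key, key], fun β => by rw [← hu.2, key]⟩

theorem IsBase.coeff_eq_zero {Φ Δ : Finset E} (hΔ : IsBase Φ Δ) {f : E → ℝ}
    (h : ∑ γ ∈ Δ, f γ • γ = 0) {γ : E} (hγ : γ ∈ Δ) : f γ = 0 := by
  have := Fintype.linearIndependent_iff.mp hΔ.indep (fun a => f a)
    (by rw [← h]; exact Finset.sum_coe_sort Δ (fun γ => f γ • γ)) ⟨γ, hγ⟩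
  exact this

/-- A simple reflection permutes the positive roots other than the simple root itself. -/
theorem reflect_pos {Φ Δ : Finset E} (hΦ : IsRootSystem Φ) (hΔ : IsBase Φ Δ) {α β : E}
    (hα : α ∈ Δ) (hβ : β ∈ posRoots Φ Δ) (hne : β ≠ α) :
    β - pair β α • α ∈ posRoots Φ Δ ∧ β - pair β α • α ≠ α := by
  classical
  simp only [posRoots, Finset.mem_filter] at hβ ⊢
  obtain ⟨hβΦ, c, hc⟩ := hβ
  have hαΦ := hΔ.subset hα
  -- By reducedness `β` involves a simple root `γ ≠ α`, whose coefficient `s_α` leaves unchanged.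
  obtain ⟨γ, hγ, hγα, hcγ⟩ : ∃ γ ∈ Δ, γ ≠ α ∧ c γ ≠ 0 := by
    by_contra! hno
    have hb : β = (c α : ℝ) • α := by
      rw [hc]
      refine Finset.sum_eq_single α (fun γ hγ hγα => ?_) (fun h => absurd hα h)
      simp [hno γ hγ hγα]
    rcases hΦ.reduced α hαΦ (c α) (hb ▸ hβΦ) with h | h
    · exact hne (by rw [hb, h, one_smul])
    · have : (0 : ℝ) ≤ c α := Nat.cast_nonneg _
      linarith
  have hsingle : ∀ t : ℝ, t • α = ∑ δ ∈ Δ, (if δ = α then t else 0) • δ := by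
    intro t
    simp [ite_smul, hα]
  have hs := hΦ.reflect_mem α hαΦ β hβΦ
  have hpos : (0 : ℝ) < c γ := by exact_mod_cast Nat.pos_of_ne_zero hcγ
  refine ⟨⟨hs, (hΔ.root_decomp _ hs).resolve_right ?_⟩, ?_⟩
  · rintro ⟨d, hd⟩
    have h0 : ∑ δ ∈ Δ, ((c δ : ℝ) - (if δ = α then pair β α else 0) + d δ) • δ = 0 := by
      simp only [add_smul, sub_smul, Finset.sum_add_distrib, Finset.sum_sub_distrib]
      rw [← hsingle, ← hc, hd]
      simp
    have := hΔ.coeff_eq_zero h0 hγ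
    have hd0 : (0 : ℝ) ≤ d γ := Nat.cast_nonneg _
    simp only [if_neg hγα] at this
    linarith
  · intro hd
    have h0 : ∑ δ ∈ Δ, ((c δ : ℝ) - (if δ = α then pair β α + 1 else 0)) • δ = 0 := by
      simp only [sub_smul, Finset.sum_sub_distrib]
      rw [← hsingle, ← hc, add_smul, one_smul, ← sub_sub, hd, sub_self]
    have := hΔ.coeff_eq_zero h0 hγ
    simp only [if_neg hγα] at this
    linarith

theorem pair_rho_pos {Φ Δ : Finset E} (hΦ : IsRootSystem Φ) (hΔ : IsBase Φ Δ) {α : E}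
    (hα : α ∈ Δ) : 0 < pair (rho Φ Δ) α := by
  classical
  have hαΦ := hΔ.subset hα
  have h0 := hΦ.ne_zero α hαΦ
  have hαp : α ∈ posRoots Φ Δ := by
    simp only [posRoots, Finset.mem_filter]
    refine ⟨hαΦ, fun δ => if δ = α then 1 else 0, ?_⟩
    simp [ite_smul, hα]
  have hrest : ∑ β ∈ (posRoots Φ Δ).erase α, pair β α = 0 := by
    refine Finset.sum_involution (fun β _ => β - pair β α • α) ?_ ?_ ?_ ?_
    · intro β _
      rw [pair_reflect h0]; ring
    · intro β _ hne heq
      have h := pair_reflect h0 β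
      rw [heq] at h
      exact hne (by linarith)
    · intro β hβ
      rw [Finset.mem_erase] at hβ
      have h := reflect_pos hΦ hΔ hα hβ.2 hβ.1
      exact Finset.mem_erase.mpr ⟨h.2, h.1⟩
    · intro β _
      exact reflect_reflect h0 β
  rw [rho, pair_smul, pair_sum, ← Finset.add_sum_erase _ _ hαp, hrest, pair_self h0]
  norm_num

/-- The upper bound defining the closed alcove holds for negative roots too. -/
theorem pair_le_of_mem_closedAlcove {Φ Δ : Finset E} (hΦ : IsRootSystem Φ) (hΔ : IsBase Φ Δ)
    {p : ℕ} {lam : E} (h : lam ∈ closedAlcove Φ Δ p) {β : E} (hβ : β ∈ Φ) :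
    pair (lam + rho Φ Δ) β ≤ p := by
  classical
  rcases hΔ.root_decomp β hβ with hc | ⟨c, hc⟩
  · exact (h.2 β (by simp only [posRoots, Finset.mem_filter]; exact ⟨hβ, hc⟩)).2
  · have hneg : -β ∈ posRoots Φ Δ := by
      simp only [posRoots, Finset.mem_filter]
      exact ⟨hΦ.neg_mem hβ, c, by rw [hc, neg_neg]⟩
    have h1 := (h.2 _ hneg).1
    rw [pair_neg_right] at h1
    have : (0 : ℝ) ≤ p := Nat.cast_nonneg _
    linarith

/-- Let `p` be a positive integer and `λ ∈ X⁺ ∩ C̄_ℤ` with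
`λ = w·0 + pσ` for some `w ∈ W` and `σ ∈ X`.  Then for every simple root
`α ∈ Δ` one has `(w⁻¹·λ, α∨) ≤ 0` and `(w⁻¹σ, α∨) ≤ 0`; that is, `w⁻¹·λ` and
`w⁻¹σ` are antidominant. -/
theorem statement11
    (Φ Δ : Finset E) (hΦ : IsRootSystem Φ) (hΔ : IsBase Φ Δ)
    (p : ℕ) (hp : 0 < p)
    (lam : E) (hdom : isDominant Φ Δ lam) (halc : lam ∈ closedAlcove Φ Δ p)
    (w : E ≃ₗ[ℝ] E) (hw : w ∈ Weyl Φ) (σ : E) (hσ : σ ∈ weightLattice Φ)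
    (hlink : lam = dotAct Φ Δ w 0 + (p : ℝ) • σ) :
    ∀ α ∈ Δ, pair (dotAct Φ Δ w.symm lam) α ≤ 0 ∧ pair (w.symm σ) α ≤ 0 := by
  intro α hα
  obtain ⟨hiso, hperm⟩ := weyl_spec hΦ hw
  have hwα : w α ∈ Φ := (hperm α).mpr (hΔ.subset hα)
  have hpair : ∀ x, pair x (w α) = pair (w.symm x) α := by
    intro x
    have h := hiso (w.symm x) α
    rw [w.apply_symm_apply] at h
    simp only [pair, h, hiso]
  have hsum : w.symm (lam + rho Φ Δ) = rho Φ Δ + (p : ℝ) • w.symm σ := by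
    rw [hlink, dotAct]
    simp only [zero_add, sub_add_eq_add_sub, sub_add_cancel, map_add, map_sub, map_smul,
      w.symm_apply_apply]
    abel
  have hdot : dotAct Φ Δ w.symm lam = (p : ℝ) • w.symm σ := by
    rw [dotAct, hsum, add_sub_cancel_left]
  have hp' : (0 : ℝ) < p := by exact_mod_cast hp
  have hneg : pair (w.symm σ) α ≤ 0 := by
    have hle := pair_le_of_mem_closedAlcove hΦ hΔ halc hwα
    rw [hpair, hsum, pair_add, pair_smul] at hle
    have hρ := pair_rho_pos hΦ hΔ hα
    obtain ⟨n, hn⟩ := hσ (w α) hwα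
    rw [hpair] at hn
    rw [hn] at hle ⊢
    have hlt : (n : ℝ) < 1 := by
      by_contra! hge
      nlinarith
    have : n < 1 := by exact_mod_cast hlt
    exact_mod_cast (by omega : n ≤ 0)
  exact ⟨by rw [hdot, pair_smul]; exact mul_nonpos_of_nonneg_of_nonpos hp'.le hneg, hneg⟩

end PaperDNN
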